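/- Fix a bipartite Bell scenario with n Alice inputs, m Bob inputs, and binary outputs, and a Bell expression β(p) = Σ c(a,b,x,y)·p(a,b|x,y) with all |c(a,b,x,y)| ≤ 1. Let β^max be its maximum over bipartite no-signaling boxes, β₁^max its maximum over no-signaling boxes with Bob's observable B₁ (input y = 1) deterministic, and w = β^max − β₁^max. Let p be an initial bipartite no-signaling box and p̃(a,b,g|x,y) a tripartite no-signaling box (Grace has a single input, binary output) implementing a gentle measurement of B₁ with information gain parameter ε ∈ [0,1/2], i.e. (i) p̃(b₁|y=1,a,x) = p(b₁|y=1,a,x) for all a,x with p(a|x) > 0, and (ii) p̃(g = b₁ | b₁, y=1, a, x) = 1/2 + ε if g = b₁ and 1/2 − ε otherwise, for all a,x with positive conditioning probability. Then n·𝒟 ≥ w·(2ε) − (β^max − β(p)), where 𝒟 = Σ_x (1/n) Σ_a p(a|x) Σ_{y ≠ 1} Σ_b |p(b|y,a,x) − p̃(b|y,a,x)| is the average total disturbance computed between p and the Alice–Bob marginal of p̃. -/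

import Mathlib

open Finset

/-- The sign `±1` associated with a binary output. -/
def sgn (b : Bool) : ℝ := if b then 1 else -1

/-- A bipartite no-signaling box with binary outputs. -/
def IsNSBox {n m : ℕ} (p : Bool → Bool → Fin n → Fin m → ℝ) : Prop :=
  (∀ a b x y, 0 ≤ p a b x y) ∧
  (∀ x y, ∑ a, ∑ b, p a b x y = 1) ∧
  (∀ a x y y', ∑ b, p a b x y = ∑ b, p a b x y') ∧
  (∀ b y x x', ∑ a, p a b x y = ∑ a, p a b x' y)

/-- A tripartite no-signaling box in which Grace holds a single fixed input. -/
def IsNS3Box {n m : ℕ} (p : Bool → Bool → Bool → Fin n → Fin m → ℝ) : Prop :=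
  (∀ a b g x y, 0 ≤ p a b g x y) ∧
  (∀ x y, ∑ a, ∑ b, ∑ g, p a b g x y = 1) ∧
  (∀ a g x y y', ∑ b, p a b g x y = ∑ b, p a b g x y') ∧
  (∀ b g y x x', ∑ a, p a b g x y = ∑ a, p a b g x' y)

/-- The Bell value `β(p) = Σ c(a,b,x,y)·p(a,b|x,y)` of a bipartite box. -/
def bell {n m : ℕ} (c : Bool → Bool → Fin n → Fin m → ℝ)
    (p : Bool → Bool → Fin n → Fin m → ℝ) : ℝ :=
  ∑ x, ∑ y, ∑ a, ∑ b, c a b x y * p a b x y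

/-- Bob's observable `B₁` (input `y = 1`, i.e. `0 : Fin m`) is deterministic. -/
def DetB1 {n m : ℕ} [NeZero m] (p : Bool → Bool → Fin n → Fin m → ℝ) : Prop :=
  ∃ b0 : Bool, ∀ x b, (∑ a, p a b x 0) = if b = b0 then 1 else 0

/-- The average total disturbance `𝒟` between the initial box `p` and the Alice–Bob marginal
of the tripartite box `pt`, over all of Bob's observables other than `B₁`. -/
noncomputable def disturbance {n m : ℕ} [NeZero m]
    (p : Bool → Bool → Fin n → Fin m → ℝ)
    (pt : Bool → Bool → Bool → Fin n → Fin m → ℝ) : ℝ :=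
  ∑ x, (1 / (n : ℝ)) * ∑ a, (∑ b, p a b x 0) *
    ∑ y ∈ Finset.univ.filter (fun y => y ≠ (0 : Fin m)), ∑ b,
      |p a b x y / (∑ b', p a b' x y) -
        (∑ g, pt a b g x y) / (∑ b', ∑ g, pt a b' g x y)|

def IsCone {n m : ℕ} (T : ℝ) (p : Bool → Bool → Fin n → Fin m → ℝ) : Prop :=
  (∀ a b x y, 0 ≤ p a b x y) ∧
  (∀ x y, ∑ a, ∑ b, p a b x y = T) ∧
  (∀ a x y y', ∑ b, p a b x y = ∑ b, p a b x y') ∧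
  (∀ b y x x', ∑ a, p a b x y = ∑ a, p a b x' y)

lemma bell_smul {n m : ℕ} (c p : Bool → Bool → Fin n → Fin m → ℝ) (k : ℝ) :
    bell c (fun a b x y => k * p a b x y) = k * bell c p := by
  unfold bell
  simp only [Finset.mul_sum]
  refine sum_congr rfl fun x _ => sum_congr rfl fun y _ => sum_congr rfl fun a _ =>
    sum_congr rfl fun b _ => by ring

lemma bell_add {n m : ℕ} (c p q : Bool → Bool → Fin n → Fin m → ℝ) :
    bell c (fun a b x y => p a b x y + q a b x y) = bell c p + bell c q := by
  unfold bell
  simp only [mul_add, Finset.sum_add_distrib]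

lemma cone_zero {n m : ℕ} {p : Bool → Bool → Fin n → Fin m → ℝ} (h : IsCone 0 p) :
    ∀ a b x y, p a b x y = 0 := by
  intro a b x y
  have h1 := h.2.1 x y
  have h2 := h.1
  simp only [Fintype.sum_bool] at h1
  have := h2 true true x y
  have := h2 true false x y
  have := h2 false true x y
  have := h2 false false x y
  cases a <;> cases b <;> linarith

lemma cone_scale {n m : ℕ} {T : ℝ} (hT : 0 < T) {p : Bool → Bool → Fin n → Fin m → ℝ}
    (h : IsCone T p) : IsNSBox (fun a b x y => T⁻¹ * p a b x y) := by
  obtain ⟨h1, h2, h3, h4⟩ := h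
  refine ⟨fun a b x y => mul_nonneg (by positivity) (h1 a b x y), fun x y => ?_,
    fun a x y y' => ?_, fun b y x x' => ?_⟩
  · simp only [← Finset.mul_sum, h2]
    field_simp
  · simp only [← Finset.mul_sum, h3 a x y y']
  · simp only [← Finset.mul_sum, h4 b y x x']

lemma cone_bell_le {n m : ℕ} {T : ℝ} (hT : 0 ≤ T) (c : Bool → Bool → Fin n → Fin m → ℝ)
    {M : ℝ} (hM : ∀ q, IsNSBox q → bell c q ≤ M)
    {p : Bool → Bool → Fin n → Fin m → ℝ} (h : IsCone T p) : bell c p ≤ T * M := by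
  rcases hT.eq_or_lt with rfl | hT
  · have := cone_zero h
    simp [bell, this]
  · have := hM _ (cone_scale hT h)
    rw [bell_smul] at this
    rwa [inv_mul_le_iff₀ hT] at this

lemma cone_bell_le_det {n m : ℕ} [NeZero m] {T : ℝ} (hT : 0 ≤ T)
    (c : Bool → Bool → Fin n → Fin m → ℝ)
    {M : ℝ} (hM : ∀ q, IsNSBox q → DetB1 q → bell c q ≤ M)
    {p : Bool → Bool → Fin n → Fin m → ℝ} (h : IsCone T p) (b0 : Bool)
    (hd : ∀ x b, (∑ a, p a b x 0) = if b = b0 then T else 0) : bell c p ≤ T * M := by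
  rcases hT.eq_or_lt with rfl | hT
  · have := cone_zero h
    simp [bell, this]
  · have := hM _ (cone_scale hT h) ⟨b0, fun x b => by
      rw [← Finset.mul_sum, hd]
      split_ifs
      · field_simp
      · simp⟩
    rw [bell_smul] at this
    rwa [inv_mul_le_iff₀ hT] at this

noncomputable def mkBox {n m : ℕ} (T : ℝ) (A : Fin n → ℝ) (B : Fin m → ℝ) (E : Fin n → Fin m → ℝ) :
    Bool → Bool → Fin n → Fin m → ℝ :=
  fun a b x y => (T + sgn a * A x + sgn b * B y + sgn a * sgn b * E x y) / 4

lemma mkBox_cone {n m : ℕ} (T : ℝ) (A : Fin n → ℝ) (B : Fin m → ℝ) (E : Fin n → Fin m → ℝ)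
    (h1 : ∀ x y, |A x + B y| - T ≤ E x y) (h2 : ∀ x y, E x y ≤ T - |A x - B y|) :
    IsCone T (mkBox T A B E) := by
  refine ⟨fun a b x y => ?_, fun x y => ?_, fun a x y y' => ?_, fun b y x x' => ?_⟩
  · have := h1 x y
    have := h2 x y
    have := le_abs_self (A x + B y)
    have := neg_le_abs (A x + B y)
    have := le_abs_self (A x - B y)
    have := neg_le_abs (A x - B y)
    cases a <;> cases b <;> simp [mkBox, sgn] <;> linarith
  · simp [mkBox, sgn]; ring
  · cases a <;> simp [mkBox, sgn] <;> ring
  · cases b <;> simp [mkBox, sgn] <;> ring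

lemma cone_eq_mkBox {n m : ℕ} [NeZero n] [NeZero m] {T : ℝ}
    {p : Bool → Bool → Fin n → Fin m → ℝ} (h : IsCone T p) :
    ∃ A B E, p = mkBox T A B E ∧ (∀ x y, |A x + B y| - T ≤ E x y) ∧
      (∀ x y, E x y ≤ T - |A x - B y|) := by
  obtain ⟨h1, h2, h3, h4⟩ := h
  simp only [Fintype.sum_bool] at h2 h3 h4
  refine ⟨fun x => p true true x 0 + p true false x 0 - p false true x 0 - p false false x 0,
    fun y => p true true 0 y + p false true 0 y - p true false 0 y - p false false 0 y,
    fun x y => p true true x y + p false false x y - p true false x y - p false true x y,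
    ?_, fun x y => ?_, fun x y => ?_⟩
  · funext a b x y
    have := h2 x y
    have := h3 true x y 0
    have := h3 false x y 0
    have := h4 true y x 0
    have := h4 false y x 0
    cases a <;> cases b <;> simp [mkBox, sgn] <;> linarith
  all_goals
    have := h2 x y
    have := h3 true x y 0
    have := h3 false x y 0
    have := h4 true y x 0
    have := h4 false y x 0
    have := h1 true true x y
    have := h1 true false x y
    have := h1 false true x y
    have := h1 false false x y
  · rw [sub_le_iff_le_add, abs_le]
    constructor <;> linarith
  · rw [le_sub_comm, abs_le]
    constructor <;> linarith

noncomputable def clp (t u : ℝ) : ℝ := max (-t) (min t u)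

lemma clp_ineq {t T u v e : ℝ} (ht : 0 ≤ t) (htT : t ≤ T) (h1 : |u + v| - T ≤ e)
    (h2 : e ≤ T - |u - v|) :
    ∃ d, |clp t u + clp t v| - t ≤ d ∧ d ≤ t - |clp t u - clp t v| ∧
      |(u - clp t u) + (v - clp t v)| - (T - t) ≤ e - d ∧
      e - d ≤ (T - t) - |(u - clp t u) - (v - clp t v)| := by
  have hu : |u| ≤ T := by grind
  have hv : |v| ≤ T := by grind
  have k1 : |clp t u + clp t v| + |(u - clp t u) + (v - clp t v)| ≤ |u + v| := by
    unfold clp; grind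
  have k2 : |clp t u - clp t v| + |(u - clp t u) - (v - clp t v)| ≤ |u - v| := by
    unfold clp; grind
  have k3 : |clp t u + clp t v| - t ≤ t - |clp t u - clp t v| := by
    unfold clp; grind
  have k4 : |(u - clp t u) + (v - clp t v)| - (T - t) ≤
      (T - t) - |(u - clp t u) - (v - clp t v)| := by
    unfold clp; grind
  generalize |clp t u + clp t v| = a at *
  generalize |clp t u - clp t v| = b at *
  generalize |(u - clp t u) + (v - clp t v)| = a' at *
  generalize |(u - clp t u) - (v - clp t v)| = b' at *
  refine ⟨max (a - t) (e - ((T - t) - b')), le_max_left _ _, ?_, ?_, ?_⟩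
  · apply max_le <;> linarith
  · rcases max_choice (a - t) (e - ((T - t) - b')) with h | h <;> rw [h] <;> linarith
  · have := le_max_right (a - t) (e - ((T - t) - b'))
    linarith

lemma cone_main {n m : ℕ} [NeZero n] [NeZero m] {T : ℝ}
    (c : Bool → Bool → Fin n → Fin m → ℝ) {M M1 : ℝ}
    (hM : ∀ q, IsNSBox q → bell c q ≤ M)
    (hM1 : ∀ q, IsNSBox q → DetB1 q → bell c q ≤ M1)
    (hw : M1 ≤ M) {p : Bool → Bool → Fin n → Fin m → ℝ} (h : IsCone T p) (g : Bool) :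
    bell c p ≤ T * M - (M - M1) * ∑ a, ∑ b, sgn g * sgn b * p a b 0 0 := by
  obtain ⟨A, B, E, rfl, h1, h2⟩ := cone_eq_mkBox h
  have hB : |B 0| ≤ T := by
    have := h1 0 0
    have := h2 0 0
    grind
  choose D hD using fun x y => clp_ineq (abs_nonneg (B 0)) hB (h1 x y) (h2 x y)
  set t := |B 0| with ht
  have ht0 : 0 ≤ t := abs_nonneg _
  have c1 := mkBox_cone t (fun x => clp t (A x)) (fun y => clp t (B y)) D
    (fun x y => (hD x y).1) (fun x y => (hD x y).2.1)
  have c2 := mkBox_cone (T - t) (fun x => A x - clp t (A x)) (fun y => B y - clp t (B y))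
    (fun x y => E x y - D x y) (fun x y => (hD x y).2.2.1) (fun x y => (hD x y).2.2.2)
  have e : mkBox T A B E = fun a b x y =>
      mkBox t (fun x => clp t (A x)) (fun y => clp t (B y)) D a b x y +
      mkBox (T - t) (fun x => A x - clp t (A x)) (fun y => B y - clp t (B y))
        (fun x y => E x y - D x y) a b x y := by
    funext a b x y
    simp only [mkBox]; ring
  have hs : ∑ a, ∑ b, sgn g * sgn b * mkBox T A B E a b 0 0 = sgn g * B 0 := by
    cases g <;> simp [mkBox, sgn] <;> ring
  have hle : sgn g * B 0 ≤ t := by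
    cases g <;> simp [sgn, ht, le_abs_self, neg_le_abs]
  have b2 := cone_bell_le (by linarith) c hM c2
  have b1 : _ ≤ t * M1 := cone_bell_le_det ht0 c hM1 c1 (decide (0 ≤ B 0)) (by
    intro x b
    have hc : clp t (B 0) = B 0 := by unfold clp; grind
    rcases le_or_gt 0 (B 0) with hb | hb
    · have : t = B 0 := abs_of_nonneg hb
      cases b <;> simp [mkBox, sgn, hc, hb] <;> linarith
    · have : t = - B 0 := abs_of_neg hb
      cases b <;> simp [mkBox, sgn, hc, not_le.mpr hb] <;> linarith)
  rw [hs, e, bell_add]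
  nlinarith [mul_le_mul_of_nonneg_left hle (sub_nonneg.mpr hw)]

/-- The information gain versus disturbance trade-off `n·𝒟 ≥ w·(2ε) − (β^max − β(p))`
for a gentle measurement of Bob's observable `B₁` with information gain `ε`:
(i) the gentle measurement leaves the sharp conditional statistics of `B₁` unchanged,
(ii) Grace's output agrees with Bob's output at `y = 1` with probability `1/2 + ε`,
and (being an operation on Bob's side) it leaves Alice's marginal unchanged. -/
theorem gain_disturbance_tradeoff {n m : ℕ} [NeZero n] [NeZero m]
    (c : Bool → Bool → Fin n → Fin m → ℝ) (hc : ∀ a b x y, |c a b x y| ≤ 1)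
    (βmax β1max : ℝ)
    (hmax : IsGreatest {v : ℝ | ∃ q, IsNSBox q ∧ v = bell c q} βmax)
    (h1max : IsGreatest {v : ℝ | ∃ q, IsNSBox q ∧ DetB1 q ∧ v = bell c q} β1max)
    (ε : ℝ) (hε : ε ∈ Set.Icc (0 : ℝ) (1/2))
    (p : Bool → Bool → Fin n → Fin m → ℝ) (hp : IsNSBox p)
    (pt : Bool → Bool → Bool → Fin n → Fin m → ℝ) (hpt : IsNS3Box pt)
    (hA : ∀ a x, (∑ b, ∑ g, pt a b g x 0) = ∑ b, p a b x 0)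
    (hi : ∀ a x, 0 < (∑ b, p a b x 0) → ∀ b,
      (∑ g, pt a b g x 0) / (∑ b', ∑ g, pt a b' g x 0) =
        p a b x 0 / (∑ b', p a b' x 0))
    (hii : ∀ a x b, 0 < (∑ g, pt a b g x 0) → ∀ g,
      pt a b g x 0 / (∑ g', pt a b g' x 0) =
        if g = b then 1/2 + ε else 1/2 - ε) :
    (n : ℝ) * disturbance p pt ≥
      (βmax - β1max) * (2 * ε) - (βmax - bell c p) := by
  have hM : ∀ q, IsNSBox q → bell c q ≤ βmax := fun q hq => hmax.2 ⟨q, hq, rfl⟩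
  have hM1 : ∀ q, IsNSBox q → DetB1 q → bell c q ≤ β1max :=
    fun q hq hd => h1max.2 ⟨q, hq, hd, rfl⟩
  have hw : β1max ≤ βmax := by
    obtain ⟨q, hq, _, hv⟩ := h1max.1
    exact hmax.2 ⟨q, hq, hv⟩
  obtain ⟨t1, t2, t3, t4⟩ := hpt
  obtain ⟨p1, p2, p3, p4⟩ := hp
  -- Grace's conditional boxes
  have hcone : ∀ g, IsCone (∑ a, ∑ b, pt a b g 0 0) (fun a b x y => pt a b g x y) := by
    intro g
    refine ⟨fun a b x y => t1 a b g x y, fun x y => ?_, fun a x y y' => t3 a g x y y',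
      fun b y x x' => t4 b g y x x'⟩
    calc ∑ a, ∑ b, pt a b g x y = ∑ a, ∑ b, pt a b g x 0 :=
          sum_congr rfl fun a _ => t3 a g x y 0
      _ = ∑ b, ∑ a, pt a b g x 0 := sum_comm
      _ = ∑ b, ∑ a, pt a b g 0 0 := sum_congr rfl fun b _ => t4 b g 0 x 0
      _ = _ := sum_comm
  have hgt := cone_main c hM hM1 hw (hcone true) true
  have hgf := cone_main c hM hM1 hw (hcone false) false
  have hsum : bell c (fun a b x y => ∑ g, pt a b g x y) =
      bell c (fun a b x y => pt a b true x y) + bell c (fun a b x y => pt a b false x y) := by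
    rw [← bell_add]; simp only [Fintype.sum_bool]
  have hpe : ∀ a b, sgn true * sgn b * pt a b true 0 0 + sgn false * sgn b * pt a b false 0 0
      = 2 * ε * (pt a b true 0 0 + pt a b false 0 0) := by
    intro a b
    have n1 := t1 a b true 0 0
    have n2 := t1 a b false 0 0
    have hh := hii a 0 b
    simp only [Fintype.sum_bool] at hh
    rcases (add_nonneg n1 n2).eq_or_lt with h0 | h0
    · have z1 : pt a b true 0 0 = 0 := by linarith
      have z2 : pt a b false 0 0 = 0 := by linarith
      simp [z1, z2]
    · have e1 := hh h0 true
      have e2 := hh h0 false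
      rw [div_eq_iff h0.ne'] at e1 e2
      cases b <;> simp [sgn] at e1 e2 ⊢ <;> linarith
  have hbt : bell c (fun a b x y => ∑ g, pt a b g x y) ≤ βmax - (βmax - β1max) * (2 * ε) := by
    have hT := t2 0 0
    have q1 := hpe true true
    have q2 := hpe true false
    have q3 := hpe false true
    have q4 := hpe false false
    have key : (∑ a, ∑ b, sgn true * sgn b * pt a b true 0 0) +
        (∑ a, ∑ b, sgn false * sgn b * pt a b false 0 0) = 2 * ε := by
      simp only [Fintype.sum_bool] at hT ⊢
      linear_combination q1 + q2 + q3 + q4 + 2 * ε * hT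
    have hT' : (∑ a, ∑ b, pt a b true 0 0) + (∑ a, ∑ b, pt a b false 0 0) = 1 := by
      simp only [Fintype.sum_bool] at hT ⊢
      linarith
    rw [hsum]
    calc _ ≤ _ := add_le_add hgt hgf
      _ = ((∑ a, ∑ b, pt a b true 0 0) + (∑ a, ∑ b, pt a b false 0 0)) * βmax -
        (βmax - β1max) * ((∑ a, ∑ b, sgn true * sgn b * pt a b true 0 0) +
        (∑ a, ∑ b, sgn false * sgn b * pt a b false 0 0)) := by ring
      _ = _ := by rw [key, hT', one_mul]
  have hmarg : ∀ a x y, (∑ b, ∑ g, pt a b g x y) = ∑ b, p a b x 0 := by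
    intro a x y
    rw [← hA, sum_comm, sum_comm (s := univ) (t := univ) (f := fun b g => pt a b g x 0)]
    exact sum_congr rfl fun g _ => t3 a g x y 0
  have hy0 : ∀ a b x, p a b x 0 - (∑ g, pt a b g x 0) = 0 := by
    intro a b x
    rcases (sum_nonneg fun b _ => p1 a b x 0 : 0 ≤ ∑ b, p a b x 0).eq_or_lt with h0 | h0
    · have z1 : p a b x 0 = 0 :=
        (sum_eq_zero_iff_of_nonneg fun b _ => p1 a b x 0).1 h0.symm b (mem_univ _)
      have z2 : ∑ g, pt a b g x 0 = 0 :=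
        (sum_eq_zero_iff_of_nonneg fun b _ => sum_nonneg fun g _ => t1 a b g x 0).1
          ((hA a x).trans h0.symm) b (mem_univ _)
      rw [z1, z2, sub_zero]
    · have := hi a x h0 b
      rw [hA, div_left_inj' h0.ne'] at this
      linarith
  have hdist : (n : ℝ) * disturbance p pt = ∑ x, ∑ a, (∑ b, p a b x 0) *
    ∑ y ∈ Finset.univ.filter (fun y => y ≠ (0 : Fin m)), ∑ b,
      |p a b x y / (∑ b', p a b' x y) -
        (∑ g, pt a b g x y) / (∑ b', ∑ g, pt a b' g x y)| := by
    have hn : (n : ℝ) ≠ 0 := Nat.cast_ne_zero.mpr (NeZero.ne n)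
    unfold disturbance
    rw [← mul_sum, ← mul_assoc, mul_one_div_cancel hn, one_mul]
  have hterm : ∀ a b x y, c a b x y * (p a b x y - ∑ g, pt a b g x y) ≤
      (∑ b, p a b x 0) * |p a b x y / (∑ b', p a b' x y) -
        (∑ g, pt a b g x y) / (∑ b', ∑ g, pt a b' g x y)| := by
    intro a b x y
    have e1 := p3 a x y 0
    rw [hmarg, e1]
    have h2 : c a b x y * (p a b x y - ∑ g, pt a b g x y) ≤ |p a b x y - ∑ g, pt a b g x y| := by
      refine (le_abs_self _).trans ?_
      rw [abs_mul]
      exact mul_le_of_le_one_left (abs_nonneg _) (hc a b x y)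
    refine h2.trans ?_
    rcases (sum_nonneg fun b _ => p1 a b x 0 : 0 ≤ ∑ b, p a b x 0).eq_or_lt with h0 | h0
    · have z1 : p a b x y = 0 :=
        (sum_eq_zero_iff_of_nonneg fun b _ => p1 a b x y).1 (e1.trans h0.symm) b (mem_univ _)
      have z2 : ∑ g, pt a b g x y = 0 :=
        (sum_eq_zero_iff_of_nonneg fun b _ => sum_nonneg fun g _ => t1 a b g x y).1
          ((hmarg a x y).trans h0.symm) b (mem_univ _)
      rw [z1, z2]; simp
    · rw [← sub_div, abs_div, abs_of_pos h0, mul_div_cancel₀ _ h0.ne']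
  have hdiff : bell c p - bell c (fun a b x y => ∑ g, pt a b g x y) ≤
      (n : ℝ) * disturbance p pt := by
    rw [hdist]
    unfold bell
    simp only [← sum_sub_distrib, ← mul_sub]
    refine sum_le_sum fun x _ => ?_
    rw [sum_comm]
    refine sum_le_sum fun a _ => ?_
    rw [mul_sum, sum_filter]
    refine sum_le_sum fun y _ => ?_
    split_ifs with hy
    · rw [mul_sum]
      exact sum_le_sum fun b _ => hterm a b x y
    · have : y = 0 := not_not.mp hy
      subst this
      simp only [hy0, mul_zero, sum_const_zero, le_refl]
  linarith
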